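/- Let M be a popular matching (with strict preference lists). Then M is well-formed: every f_i-job p is matched in M to an applicant x ∈ C_i with f(x) = p, and every applicant x is matched either to f(x) or to s(x). -/

import Mathlib

/-!
A matching that is not well-formed is beaten by a short chain of promotions. If `x` would rather
have a job `p` than what it gets, give `p` to `x` and either leave the previous holder `y` of `p`
unmatched, or move `y` to a job `q` it likes more and leave the previous holder of `q` unmatched.
Popularity of `M` says that neither move pays off: the holder of `p` weighs at least as much as `x`
(`holder_of_prefers`), and the holder of `q` weighs at least as much as `x` and `y` together
(`holder_of_chain`).

Jobs are treated by strong induction on the category `i`. Suppose the `f_j`-jobs with `j < i` are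
held as required, and let `p = f x` be an `f_i`-job not held as required. Then `x` prefers `p`,
so by the one-step move `p` has a holder `y` of category at most `i`.

* No holder `y` of an `f_i`-job has a category `j < i`: it would prefer `f y`, whose holder has
  category `j` by induction, so the two-step move gains the weight of `x`.
* If `y` has category `i` and `f y ≠ p`, it prefers `f y`, so `f y` is held by someone of weight at
  least `2 w_i`, hence of category less than `i`, which was just excluded.

Finally, an applicant `x` matched to neither `f x` nor `s x` prefers `s x`, because every job it
likes more is an `f_j`-job with `j ≤ cat x` and so is held by an applicant other than `x`. The
holder `y` of `s x` has category at most that of `x`, so it prefers `f y`, whose holder weighs the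
same as `y`; the two-step move gains the weight of `x`.
-/

/-- `p` is an `f_i`-job: `p = f x` for some applicant `x` in category `i`. -/
def FJob {A J : Type*} (cat : A → ℕ) (f : A → J) (i : ℕ) (p : J) : Prop :=
  ∃ x, cat x = i ∧ f x = p

/-- The rank of the job (if any) that applicant `x` receives in matching `M`;
`⊤` means `x` is unmatched (worse than any job on the list). -/
def mrank {A J : Type*} (r : A → J → ℕ∞) (M : A → Option J) (x : A) : ℕ∞ :=
  (M x).elim ⊤ (r x)

/-- `M` is a matching of the instance: every applicant is assigned at most one job,
along an edge of `H` (i.e. a job on its list, `r x p < ⊤`), and every job is assigned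
to at most one applicant. -/
def IsMatching {A J : Type*} (r : A → J → ℕ∞) (M : A → Option J) : Prop :=
  (∀ x p, M x = some p → r x p < ⊤) ∧ ∀ x y p, M x = some p → M y = some p → x = y

open Classical in
/-- Satisfaction of `M₁` with respect to `M₂`: total weight of applicants who prefer
`M₁` to `M₂` minus the total weight of those who prefer `M₂` to `M₁`. -/
noncomputable def satisfaction {A J : Type*} [Fintype A]
    (r : A → J → ℕ∞) (w : A → ℚ) (M₁ M₂ : A → Option J) : ℚ :=
  (∑ x, if mrank r M₁ x < mrank r M₂ x then w x else 0)
    - ∑ x, if mrank r M₂ x < mrank r M₁ x then w x else 0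

/-- `M₁` is more popular than `M₂`. -/
def MorePopular {A J : Type*} [Fintype A]
    (r : A → J → ℕ∞) (w : A → ℚ) (M₁ M₂ : A → Option J) : Prop :=
  0 < satisfaction r w M₁ M₂

/-- A matching is popular if no matching is more popular than it. -/
def Popular {A J : Type*} [Fintype A]
    (r : A → J → ℕ∞) (w : A → ℚ) (M : A → Option J) : Prop :=
  IsMatching r M ∧ ∀ M', IsMatching r M' → ¬ MorePopular r w M' M

/-- A matching is well-formed (strict lists) if every `f_i`-job `p` is matched to an
applicant of category `i` whose first job is `p`, and every applicant is matched
either to its first job or to its second job. -/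
def WellFormed {A J : Type*} (cat : A → ℕ) (f s : A → J) (M : A → Option J) : Prop :=
  (∀ i p, FJob cat f i p → ∃ x, cat x = i ∧ f x = p ∧ M x = some p) ∧
  ∀ x, M x = some (f x) ∨ M x = some (s x)

/-! ### Profitable moves -/

section Moves

variable {A J : Type*} {r : A → J → ℕ∞} {M : A → Option J}

theorem mrank_of_eq_some {x : A} {p : J} (h : M x = some p) : mrank r M x = r x p := by
  simp [mrank, h]

theorem mrank_of_eq_none {x : A} (h : M x = none) : mrank r M x = ⊤ := by
  simp [mrank, h]

variable [Fintype A] {w : A → ℚ}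

open Classical in
/-- To refute popularity it suffices to bound the contribution of each applicant from below by a
function with positive sum. -/
theorem Popular.sum_nonpos (hM : Popular r w M) {M' : A → Option J} (hM' : IsMatching r M')
    (g : A → ℚ)
    (hg : ∀ a, g a ≤ (if mrank r M' a < mrank r M a then w a else 0)
      - (if mrank r M a < mrank r M' a then w a else 0)) :
    ∑ a, g a ≤ 0 := by
  have h := hM.2 M' hM'
  unfold MorePopular satisfaction at h
  rw [← Finset.sum_sub_distrib] at h
  exact (Finset.sum_le_sum fun a _ => hg a).trans (not_lt.mp h)

open Classical in
/-- The one-step move: an applicant preferring `p` cannot profitably take it. -/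
theorem holder_of_prefers (hM : Popular r w M) (hw : ∀ a, 0 < w a) {x : A} {p : J}
    (hx : r x p < mrank r M x) : ∃ y, M y = some p ∧ w x ≤ w y := by
  by_contra! hcon
  have hxp : M x ≠ some p := fun h => by
    rw [mrank_of_eq_some h] at hx
    exact lt_irrefl _ hx
  obtain ⟨hedge, hinj⟩ := hM.1
  set M' : A → Option J := fun a => if a = x then some p else if M a = some p then none else M a
    with hM'
  have hmatch : IsMatching r M' := by
    constructor
    · intro a b hab
      have := lt_of_lt_of_le hx le_top
      grind
    · intro a b c ha hb
      grind
  have hx' : mrank r M' x = r x p := mrank_of_eq_some (by simp [hM'])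
  have hother : ∀ a, a ≠ x → M a ≠ some p → mrank r M' a = mrank r M a := by
    intro a h1 h2
    simp [mrank, hM', h1, h2]
  by_cases hy : ∃ y, M y = some p
  · obtain ⟨y, hy⟩ := hy
    have hyx : y ≠ x := by rintro rfl; exact hxp hy
    have hy' : mrank r M' y = ⊤ := mrank_of_eq_none (by simp [hM', hyx, hy])
    have hsum := hM.sum_nonpos hmatch
      (fun a => (if a = x then w x else 0) - (if a = y then w y else 0)) (by
        intro a
        by_cases hax : a = x
        · subst hax
          simp [hx', hx, hyx.symm, hx.not_gt]
        · by_cases hay : a = y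
          · subst hay
            simp only [hax, if_false, hy']
            have := (hw a).le
            split_ifs <;> simp_all
          · rw [hother a hax fun h => hay (hinj _ _ _ h hy)]
            simp [hax, hay])
    have := hcon y hy
    simp [Finset.sum_sub_distrib] at hsum
    linarith
  · push Not at hy
    have hsum := hM.sum_nonpos hmatch (fun a => if a = x then w x else 0) (by
        intro a
        by_cases hax : a = x
        · subst hax
          simp [hx', hx, hx.not_gt]
        · rw [hother a hax (hy a)]
          simp [hax])
    have := hw x
    simp at hsum
    linarith

open Classical in
/-- The two-step move: if `x` prefers the job `p` of `y`, and `y` prefers `q`, then `q` is held by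
someone other than `x` who weighs at least as much as `x` and `y` together. -/
theorem holder_of_chain (hM : Popular r w M) (hw : ∀ a, 0 < w a) {x y : A} {p q : J}
    (hx : r x p < mrank r M x) (hy : M y = some p) (hq : r y q < r y p) :
    ∃ z, M z = some q ∧ z ≠ x ∧ w x + w y ≤ w z := by
  by_contra! hcon
  have hxp : M x ≠ some p := fun h => by
    rw [mrank_of_eq_some h] at hx
    exact lt_irrefl _ hx
  have hyx : y ≠ x := by rintro rfl; exact hxp hy
  have hpq : p ≠ q := by rintro rfl; exact lt_irrefl _ hq
  obtain ⟨hedge, hinj⟩ := hM.1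
  set M' : A → Option J := fun a =>
    if a = x then some p else if a = y then some q else if M a = some q then none else M a
    with hM'
  have hmatch : IsMatching r M' := by
    constructor
    · intro a b hab
      have := lt_of_lt_of_le hx le_top
      have := lt_of_lt_of_le hq le_top
      grind
    · intro a b c ha hb
      grind
  have hx' : mrank r M' x = r x p := mrank_of_eq_some (by simp [hM'])
  have hy' : mrank r M' y = r y q := mrank_of_eq_some (by simp [hM', hyx])
  have hym : mrank r M y = r y p := mrank_of_eq_some hy
  have hother : ∀ a, a ≠ x → a ≠ y → M a ≠ some q → mrank r M' a = mrank r M a := by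
    intro a h1 h2 h3
    simp [mrank, hM', h1, h2, h3]
  -- If `x` itself holds `q`, or nobody does, then the move costs nobody anything.
  by_cases hz : ∃ z, M z = some q ∧ z ≠ x
  · obtain ⟨z, hz, hzx⟩ := hz
    have hzy : z ≠ y := by rintro rfl; exact hpq (Option.some.inj (hy.symm.trans hz))
    have hz' : mrank r M' z = ⊤ := mrank_of_eq_none (by simp [hM', hzx, hzy, hz])
    have hsum := hM.sum_nonpos hmatch
      (fun a => (if a = x then w x else 0) + (if a = y then w y else 0)
        - (if a = z then w z else 0)) (by
        intro a
        by_cases hax : a = x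
        · subst hax
          simp [hx', hx, hyx.symm, hzx.symm, hx.not_gt]
        · by_cases hay : a = y
          · subst hay
            simp [hy', hym, hq, hq.not_gt, hax, hzy.symm]
          · by_cases haz : a = z
            · subst haz
              simp only [hax, hay, if_false, hz']
              have := (hw a).le
              split_ifs <;> simp_all
            · rw [hother a hax hay fun h => haz (hinj _ _ _ h hz)]
              simp [hax, hay, haz])
    have := hcon z hz hzx
    simp [Finset.sum_sub_distrib, Finset.sum_add_distrib] at hsum
    linarith
  · push Not at hz
    have hsum := hM.sum_nonpos hmatch
      (fun a => (if a = x then w x else 0) + (if a = y then w y else 0)) (by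
        intro a
        by_cases hax : a = x
        · subst hax
          simp [hx', hx, hyx.symm, hx.not_gt]
        · by_cases hay : a = y
          · subst hay
            simp [hy', hym, hq, hq.not_gt, hax]
          · rw [hother a hax hay fun h => hax (hz a h)]
            simp [hax, hay])
    have := hw x
    have := hw y
    simp [Finset.sum_add_distrib] at hsum
    linarith

end Moves

/-! ### Well-formedness -/

/-- Every popular matching (strict lists) is well-formed. -/
theorem popular_isWellFormed
    {A J : Type*} [Fintype A] [Fintype J]
    (k : ℕ) (r : A → J → ℕ∞) (cat : A → ℕ) (wt : ℕ → ℚ)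
    (f : A → J) (s : A → J) (l : A → J)
    (hcat : ∀ x, 1 ≤ cat x ∧ cat x ≤ k)
    (hw : ∀ i j, 1 ≤ i → i < j → j ≤ k → wt j < wt i)
    (hwpos : ∀ i, 1 ≤ i → i ≤ k → 0 < wt i)
    (hstrict : ∀ x p q, r x p < ⊤ → r x q < ⊤ → r x p = r x q → p = q)
    (hlast : ∀ x, r x (l x) < ⊤ ∧ (∀ p, r x p < ⊤ → p ≠ l x → r x p < r x (l x)) ∧
      ∀ y, r y (l x) < ⊤ → y = x)
    (hfirst : ∀ x, r x (f x) < ⊤ ∧ (∀ j, j < cat x → ¬ FJob cat f j (f x)) ∧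
      ∀ p, r x p < ⊤ → r x p < r x (f x) → ∃ j, j < cat x ∧ FJob cat f j p)
    (hsecond : ∀ x, r x (s x) < ⊤ ∧ (∀ j, j ≤ cat x → ¬ FJob cat f j (s x)) ∧
      ∀ p, r x p < ⊤ → r x p < r x (s x) → ∃ j, j ≤ cat x ∧ FJob cat f j p)
    (M : A → Option J) (hpop : Popular r (fun z => wt (cat z)) M) :
    WellFormed cat f s M := by
  have hpos : ∀ a, 0 < wt (cat a) := fun a => hwpos _ (hcat a).1 (hcat a).2
  have hanti : ∀ a b, cat a < cat b → wt (cat b) < wt (cat a) := fun a b h =>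
    hw _ _ (hcat a).1 h (hcat b).2
  have hcat_le : ∀ a b, wt (cat a) ≤ wt (cat b) → cat b ≤ cat a := fun a b h =>
    not_lt.mp fun hlt => not_le.mpr (hanti a b hlt) h
  have hmat := hpop.1
  -- Only jobs claimed by stronger categories can beat `f y` on the list of `y`.
  have hprefer : ∀ y p, r y p < ⊤ → p ≠ f y → (∀ j, j < cat y → ¬ FJob cat f j p) →
      r y (f y) < r y p := by
    intro y p hp hne hnot
    rcases lt_trichotomy (r y (f y)) (r y p) with h | h | h
    · exact h
    · exact absurd (hstrict y _ _ (hfirst y).1 hp h).symm hne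
    · obtain ⟨j, hj, hf⟩ := (hfirst y).2.2 p hp h
      exact absurd hf (hnot j hj)
  have hjobs : ∀ i p, FJob cat f i p → ∃ x, cat x = i ∧ f x = p ∧ M x = some p := by
    intro i
    induction i using Nat.strong_induction_on with
    | _ i ih =>
    -- An applicant of category `i` without its first job prefers that job to what it gets.
    have hlack : ∀ x, cat x = i → M x ≠ some (f x) → r x (f x) < mrank r M x := by
      intro x hx hne
      cases hMx : M x with
      | none => rw [mrank_of_eq_none hMx]; exact (hfirst x).1
      | some p =>
        rw [mrank_of_eq_some hMx]
        refine hprefer x p (hmat.1 x p hMx) (fun h => hne (h ▸ hMx)) fun j hj hf => ?_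
        obtain ⟨z, hz, -, hMz⟩ := ih j (hx ▸ hj) p hf
        have := hmat.2 z x p hMz hMx
        subst this
        omega
    -- An `f_i`-job is never held by an applicant from a stronger category.
    have hheld : ∀ p, FJob cat f i p → ∀ y, M y = some p → i ≤ cat y := by
      rintro p ⟨x, hx, rfl⟩ y hy
      by_contra! hlt
      have hxy : M x ≠ some (f x) := fun h => by
        have := hmat.2 x y _ h hy
        subst this
        omega
      have hfy : r y (f y) < r y (f x) := by
        refine hprefer y _ (hmat.1 y _ hy) (fun h => ?_) fun j hj => (hfirst x).2.1 j (by omega)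
        exact (hfirst x).2.1 (cat y) (by omega) ⟨y, rfl, h.symm⟩
      obtain ⟨z, hz, -, hwz⟩ := holder_of_chain hpop hpos (hlack x hx hxy) hy hfy
      obtain ⟨u, hu, -, hMu⟩ := ih (cat y) hlt (f y) ⟨y, rfl, rfl⟩
      have := hmat.2 z u _ hz hMu
      subst this
      have := hpos x
      simp only [hu] at hwz
      linarith
    rintro p ⟨x, hx, rfl⟩
    by_contra! hcon
    have hxp := hlack x hx (hcon x hx rfl)
    obtain ⟨y, hy, hwy⟩ := holder_of_prefers hpop hpos hxp
    have hyi : cat y = i :=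
      le_antisymm (hx ▸ hcat_le x y hwy) (hheld _ ⟨x, hx, rfl⟩ y hy)
    have hfy : r y (f y) < r y (f x) :=
      hprefer y _ (hmat.1 y _ hy) (fun h => hcon y hyi h.symm hy)
        fun j hj => (hfirst x).2.1 j (by omega)
    obtain ⟨z, hz, -, hwz⟩ := holder_of_chain hpop hpos hxp hy hfy
    have hzi := hheld _ ⟨y, hyi, rfl⟩ z hz
    have hzy : cat z < cat y := by
      by_contra! hle
      rcases hle.lt_or_eq with h | h
      · have := hanti y z h
        have := hpos x
        linarith
      · have := hpos x
        simp only [← h] at hwz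
        linarith
    omega
  refine ⟨hjobs, fun x => ?_⟩
  by_contra! hcon
  obtain ⟨hxf, hxs⟩ := hcon
  have hlack : r x (s x) < mrank r M x := by
    cases hMx : M x with
    | none => rw [mrank_of_eq_none hMx]; exact (hsecond x).1
    | some p =>
      rw [mrank_of_eq_some hMx]
      have hp := hmat.1 x p hMx
      rcases lt_trichotomy (r x (s x)) (r x p) with h | h | h
      · exact h
      · exact absurd (hstrict x _ _ (hsecond x).1 hp h ▸ hMx) hxs
      · obtain ⟨j, -, hf⟩ := (hsecond x).2.2 p hp h
        obtain ⟨z, -, hfz, hMz⟩ := hjobs j p hf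
        have := hmat.2 z x p hMz hMx
        subst this
        exact absurd (hfz ▸ hMz) hxf
  obtain ⟨y, hy, hwy⟩ := holder_of_prefers hpop hpos hlack
  have hyx : cat y ≤ cat x := hcat_le x y hwy
  have hfy : r y (f y) < r y (s x) :=
    hprefer y _ (hmat.1 y _ hy)
      (fun h => (hsecond x).2.1 (cat y) hyx ⟨y, rfl, h.symm⟩)
      fun j hj => (hsecond x).2.1 j (by omega)
  obtain ⟨z, hz, -, hwz⟩ := holder_of_chain hpop hpos hlack hy hfy
  obtain ⟨u, hu, -, hMu⟩ := hjobs (cat y) (f y) ⟨y, rfl, rfl⟩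
  have := hmat.2 z u _ hz hMu
  subst this
  have := hpos x
  simp only [hu] at hwz
  linarith
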